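/- Let Φ be a rich sequence. The map E ↦ [E]_G defines a bijection between the definable equivalence relations on D_Φ (formulas E(x_{<n}, y_{<n}), for some n, up to T-equivalence on D_Φ, which define an equivalence relation on the realizations of D_Φ in every model of T) and the collection of clopen subsets H ⊆ G_Φ(T) satisfying H = H·H⁻¹ and B_Φ(T) ⊆ H. Moreover, if H = [E]_G and a ∈ M^ℕ realizes D_Φ and enumerates a countable model M, with e = tp(a), then the map tp(a,b) ↦ [b]_E (the E-class of b) is a bijection between the coset space {gH : g ∈ G_Φ(T), t_g = e} and the set of E-classes of realizations of D_Φ in M. -/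

import Mathlib

open FirstOrder FirstOrder.Language

variable {L : FirstOrder.Language}

/-- A sequence `Φ = (φ_n(x_{<n}, y))_n` of formulas (with `y` a single variable) is
rich if every formula `φ(x_{<k}, y)` appears, up to dummy variables, as `φ_n` for some
`n ≥ k`. -/
def IsRich (Φ : ∀ n : ℕ, L.Formula (Fin n ⊕ Unit)) : Prop :=
  ∀ (k : ℕ) (ψ : L.Formula (Fin k ⊕ Unit)),
    ∃ (n : ℕ) (h : k ≤ n), Φ n = ψ.relabel (Sum.map (Fin.castLE h) id)

/-- `a_{<n}` realizes `D_{Φ,n}`, i.e.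
`⋀_{k<n} ∀y [φ_k(a_{<k}, y) → φ_k(a_{<k}, a_k)]` holds in `M`. -/
def RealizesDn (Φ : ∀ n : ℕ, L.Formula (Fin n ⊕ Unit)) {M : Type*} [L.Structure M]
    (n : ℕ) (a : Fin n → M) : Prop :=
  ∀ (k : Fin n) (y : M),
    (Φ k).Realize (Sum.elim (fun i : Fin k => a (Fin.castLE k.2.le i)) (fun _ => y)) →
    (Φ k).Realize (Sum.elim (fun i : Fin k => a (Fin.castLE k.2.le i)) (fun _ => a k))

/-- The sequence `a : ℕ → M` realizes the partial type `D_Φ = ⋀_n D_{Φ,n}(x_{<n})`. -/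
def RealizesD (Φ : ∀ n : ℕ, L.Formula (Fin n ⊕ Unit)) {M : Type*} [L.Structure M]
    (a : ℕ → M) : Prop :=
  ∀ (k : ℕ) (y : M),
    (Φ k).Realize (Sum.elim (fun i : Fin k => a i) (fun _ => y)) →
    (Φ k).Realize (Sum.elim (fun i : Fin k => a i) (fun _ => a k))

/-- The (Boolean-valued) complete type of a tuple `a : α → M`: the set of formulas in
variables `α` satisfied by `a`, viewed as a point of the Stone-type space
`L.Formula α → Bool` (with the product topology, `Bool` discrete). -/
noncomputable def tpFun {M : Type*} [L.Structure M] {α : Type*} (a : α → M) :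
    L.Formula α → Bool :=
  fun φ => @decide (φ.Realize a) (Classical.propDecidable _)


/-- `S_{kD_Φ}(T)`: the space of types of `k`-tuples of realizations of `D_Φ`. -/
def SkD (T : L.Theory) (Φ : ∀ n : ℕ, L.Formula (Fin n ⊕ Unit)) (k : ℕ) :
    Set (L.Formula (Fin k × ℕ) → Bool) :=
  {p | ∃ (M : Type) (_ : L.Structure M) (_ : T.Model M) (_ : Countable M)
    (a : Fin k → ℕ → M), (∀ i, RealizesD Φ (a i)) ∧ p = tpFun (fun q => a q.1 q.2)}

/-- `S_{kD_{Φ,n}}(T)`: the space of types of `k`-tuples of realizations of `D_{Φ,n}`. -/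
def SkDn (T : L.Theory) (Φ : ∀ n : ℕ, L.Formula (Fin n ⊕ Unit)) (k n : ℕ) :
    Set (L.Formula (Fin k × Fin n) → Bool) :=
  {p | ∃ (M : Type) (_ : L.Structure M) (_ : T.Model M) (_ : Countable M)
    (a : Fin k → Fin n → M), (∀ i, RealizesDn Φ n (a i)) ∧ p = tpFun (fun q => a q.1 q.2)}

/-- `G_Φ^{[k]}(T)`: the set of types `tp(a⁰, …, a^{k-1})` where all `a^i` are
enumerations of one common countable model of `T` and each realizes `D_Φ`. -/
def GPhiK (T : L.Theory) (Φ : ∀ n : ℕ, L.Formula (Fin n ⊕ Unit)) (k : ℕ) :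
    Set (L.Formula (Fin k × ℕ) → Bool) :=
  {p | ∃ (M : Type) (_ : L.Structure M) (_ : T.Model M) (_ : Countable M)
    (a : Fin k → ℕ → M), (∀ i, Function.Surjective (a i)) ∧ (∀ i, RealizesD Φ (a i)) ∧
    p = tpFun (fun q => a q.1 q.2)}

/-- The restriction map `π_{k,n} : tp(a⁰, …, a^{k-1}) ↦ tp(a⁰_{<n}, …, a^{k-1}_{<n})`. -/
def resMap (k n : ℕ) :
    (L.Formula (Fin k × ℕ) → Bool) → (L.Formula (Fin k × Fin n) → Bool) :=
  fun p φ => p (φ.relabel fun q => (q.1, (q.2 : ℕ)))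

/-- `B_Φ(T) = S_{D_Φ}(T)`: the set of complete types extending `D_Φ`. -/
def BPhi (T : L.Theory) (Φ : ∀ n : ℕ, L.Formula (Fin n ⊕ Unit)) :
    Set (L.Formula ℕ → Bool) :=
  {p | ∃ (M : Type) (_ : L.Structure M) (_ : T.Model M) (_ : Countable M) (a : ℕ → M),
    RealizesD Φ a ∧ p = tpFun a}

/-- `G_Φ(T)`: the set of types `tp(a,b)` where `a` and `b` are enumerations of one
common countable model of `T` and both realize `D_Φ`. -/
def GPhi (T : L.Theory) (Φ : ∀ n : ℕ, L.Formula (Fin n ⊕ Unit)) :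
    Set (L.Formula (ℕ ⊕ ℕ) → Bool) :=
  {p | ∃ (M : Type) (_ : L.Structure M) (_ : T.Model M) (_ : Countable M) (a b : ℕ → M),
    Function.Surjective a ∧ Function.Surjective b ∧
    RealizesD Φ a ∧ RealizesD Φ b ∧ p = tpFun (Sum.elim a b)}

/-- The source map `tp(a,b) ↦ tp(b)`. -/
def srcMap : (L.Formula (ℕ ⊕ ℕ) → Bool) → (L.Formula ℕ → Bool) :=
  fun p φ => p (φ.relabel Sum.inr)

/-- The target map `tp(a,b) ↦ tp(a)`. -/
def tgtMap : (L.Formula (ℕ ⊕ ℕ) → Bool) → (L.Formula ℕ → Bool) :=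
  fun p φ => p (φ.relabel Sum.inl)


/-- The formula `x_i = y_i` in the variables `ℕ ⊕ ℕ`. -/
def eqFml (i : ℕ) : L.Formula (ℕ ⊕ ℕ) :=
  Term.equal (Term.var (Sum.inl i)) (Term.var (Sum.inr i))

/-- `[Eⁿ]_G`: the set of types in `G_Φ(T)` containing the formula
`Eⁿ(x,y) : x_{<n} = y_{<n}`. -/
def EnSet (T : L.Theory) (Φ : ∀ n : ℕ, L.Formula (Fin n ⊕ Unit)) (n : ℕ) :
    Set (L.Formula (ℕ ⊕ ℕ) → Bool) :=
  {p ∈ GPhi T Φ | ∀ i < n, p (eqFml i) = true}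


/-- The set of products `A · A'` of all composable pairs from `A` and `A'`:
`tp(a,b) · tp(b,c) = tp(a,c)` for enumerations `a, b, c` of a common countable model,
each realizing `D_Φ`. -/
def prodSet (T : L.Theory) (Φ : ∀ n : ℕ, L.Formula (Fin n ⊕ Unit))
    (A A' : Set (L.Formula (ℕ ⊕ ℕ) → Bool)) : Set (L.Formula (ℕ ⊕ ℕ) → Bool) :=
  {r | ∃ (M : Type) (_ : L.Structure M) (_ : T.Model M) (_ : Countable M)
    (a b c : ℕ → M),
    Function.Surjective a ∧ Function.Surjective b ∧ Function.Surjective c ∧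
    RealizesD Φ a ∧ RealizesD Φ b ∧ RealizesD Φ c ∧
    tpFun (Sum.elim a b) ∈ A ∧ tpFun (Sum.elim b c) ∈ A' ∧ r = tpFun (Sum.elim a c)}

/-- The set of inverses `A⁻¹ = {g⁻¹ : g ∈ A}`, where `tp(a,b)⁻¹ = tp(b,a)`. -/
def invSet (T : L.Theory) (Φ : ∀ n : ℕ, L.Formula (Fin n ⊕ Unit))
    (A : Set (L.Formula (ℕ ⊕ ℕ) → Bool)) : Set (L.Formula (ℕ ⊕ ℕ) → Bool) :=
  {r | ∃ (M : Type) (_ : L.Structure M) (_ : T.Model M) (_ : Countable M)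
    (a b : ℕ → M),
    Function.Surjective a ∧ Function.Surjective b ∧
    RealizesD Φ a ∧ RealizesD Φ b ∧
    tpFun (Sum.elim a b) ∈ A ∧ r = tpFun (Sum.elim b a)}

/-- `B_Φ(T)`, identified inside `S_{2×ℕ}(T)` with the set of types `tp(a,a)`. -/
def basePairs (T : L.Theory) (Φ : ∀ n : ℕ, L.Formula (Fin n ⊕ Unit)) :
    Set (L.Formula (ℕ ⊕ ℕ) → Bool) :=
  {r | ∃ (M : Type) (_ : L.Structure M) (_ : T.Model M) (_ : Countable M) (a : ℕ → M),
    Function.Surjective a ∧ RealizesD Φ a ∧ r = tpFun (Sum.elim a a)}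


/-- `[E]_G`: the set of types in `G_Φ(T)` containing the formula `E(x_{<n}, y_{<n})`. -/
def FmlPairSet (T : L.Theory) (Φ : ∀ n : ℕ, L.Formula (Fin n ⊕ Unit)) (n : ℕ)
    (E : L.Formula (Fin n ⊕ Fin n)) : Set (L.Formula (ℕ ⊕ ℕ) → Bool) :=
  {p ∈ GPhi T Φ | p (E.relabel (Sum.map (Fin.val) (Fin.val))) = true}

/-- `E(a, b)` for sequences `a, b : ℕ → M`: the formula `E` holds of
`(a_{<n}, b_{<n})`. -/
def RealizePair {n : ℕ} (E : L.Formula (Fin n ⊕ Fin n)) {M : Type*} [L.Structure M]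
    (a b : ℕ → M) : Prop :=
  E.Realize (Sum.elim (fun i : Fin n => a i) (fun i : Fin n => b i))

/-- `E(x_{<n}, y_{<n})` is a definable equivalence relation on `D_Φ`: in every
(countable) model of `T` it restricts to a reflexive, symmetric and transitive relation
on the realizations of `D_Φ`. -/
def IsDefEquivRel (T : L.Theory) (Φ : ∀ n : ℕ, L.Formula (Fin n ⊕ Unit)) (n : ℕ)
    (E : L.Formula (Fin n ⊕ Fin n)) : Prop :=
  ∀ (M : Type) (_ : L.Structure M) (_ : T.Model M) (_ : Countable M),
    (∀ a : ℕ → M, RealizesD Φ a → RealizePair E a a) ∧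
    (∀ a b : ℕ → M, RealizesD Φ a → RealizesD Φ b →
      RealizePair E a b → RealizePair E b a) ∧
    (∀ a b c : ℕ → M, RealizesD Φ a → RealizesD Φ b → RealizesD Φ c →
      RealizePair E a b → RealizePair E b c → RealizePair E a c)

/-- The coset `gH = {g · h : h ∈ H}` in `G_Φ(T)`. -/
def coset (T : L.Theory) (Φ : ∀ n : ℕ, L.Formula (Fin n ⊕ Unit))
    (g : L.Formula (ℕ ⊕ ℕ) → Bool) (H : Set (L.Formula (ℕ ⊕ ℕ) → Bool)) :
    Set (L.Formula (ℕ ⊕ ℕ) → Bool) :=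
  prodSet T Φ {g} H


section Helpers
universe u v w w'

theorem tpFun_eq_true_iff {M : Type*} [L.Structure M] {α : Type*} (a : α → M)
    (φ : L.Formula α) : tpFun a φ = true ↔ φ.Realize a := by
  simp [tpFun]

theorem tpFun_eq_iff {M N : Type*} [L.Structure M] [L.Structure N] {α : Type*}
    (a : α → M) (b : α → N) :
    tpFun (L := L) a = tpFun b ↔ ∀ φ : L.Formula α, φ.Realize a ↔ φ.Realize b := by
  constructor
  · intro h φ
    rw [← tpFun_eq_true_iff, ← tpFun_eq_true_iff, h]
  · intro h
    funext φ
    rw [Bool.eq_iff_iff, tpFun_eq_true_iff, tpFun_eq_true_iff, h]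

theorem exists_restrict {α β : Type} (φ : L.Formula α) (g : β → α)
    (h : ∀ v : α, v ∈ @BoundedFormula.freeVarFinset L α (Classical.decEq α) 0 φ →
      v ∈ Set.range g) :
    ∃ φ' : L.Formula β, ∀ (M : Type) [L.Structure M] (x : α → M),
      φ'.Realize (x ∘ g) ↔ φ.Realize x := by
  classical
  let _ := Classical.decEq α
  choose f hf using h
  refine ⟨BoundedFormula.restrictFreeVar φ (fun v => f v.1 v.2), fun M _ x => ?_⟩
  exact BoundedFormula.realize_restrictFreeVar (φ := φ) x (fun a => by simp [hf])

theorem exists_pair_restrict (φ : L.Formula (ℕ ⊕ ℕ)) :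
    ∃ m : ℕ, ∀ n, m ≤ n → ∃ φ' : L.Formula (Fin n ⊕ Fin n),
      ∀ (M : Type) [L.Structure M] (a b : ℕ → M),
      RealizePair φ' a b ↔ φ.Realize (Sum.elim a b) := by
  classical
  let _ := Classical.decEq (ℕ ⊕ ℕ)
  refine ⟨(BoundedFormula.freeVarFinset φ).sup (Sum.elim id id) + 1, fun n hn => ?_⟩
  obtain ⟨φ', h⟩ := exists_restrict φ (Sum.map (Fin.val : Fin n → ℕ) (Fin.val : Fin n → ℕ)) (by
    intro v hv
    have := Finset.le_sup (f := Sum.elim id id) hv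
    rcases v with v | v
    · exact ⟨Sum.inl ⟨v, by simp at this; omega⟩, rfl⟩
    · exact ⟨Sum.inr ⟨v, by simp at this; omega⟩, rfl⟩)
  refine ⟨φ', fun M _ a b => ?_⟩
  rw [← h M, RealizePair, Sum.elim_comp_map]
  rfl

theorem exists_witness {Φ : ∀ n : ℕ, L.Formula (Fin n ⊕ Unit)} (hΦ : IsRich Φ)
    {M : Type} [L.Structure M] {a : ℕ → M} (ha : RealizesD Φ a)
    (ψ : L.Formula (ℕ ⊕ Unit)) (y : M) (hy : ψ.Realize (Sum.elim a (fun _ => y))) :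
    ∃ n, ψ.Realize (Sum.elim a (fun _ => a n)) := by
  classical
  let _ := Classical.decEq (ℕ ⊕ Unit)
  let K := (BoundedFormula.freeVarFinset ψ).sup (Sum.elim id (fun _ => 0)) + 1
  obtain ⟨ψ', h⟩ := exists_restrict ψ (Sum.map (Fin.val : Fin K → ℕ) id) (by
    intro v hv
    have := Finset.le_sup (f := Sum.elim id (fun _ => 0)) hv
    rcases v with v | v
    · exact ⟨Sum.inl ⟨v, by simp at this; omega⟩, rfl⟩
    · exact ⟨Sum.inr v, rfl⟩)
  obtain ⟨n, hn, e⟩ := hΦ K ψ'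
  have key : ∀ z : M, (Φ n).Realize (Sum.elim (fun i : Fin n => a i) (fun _ => z)) ↔
      ψ.Realize (Sum.elim a (fun _ => z)) := by
    intro z
    rw [e, Formula.realize_relabel, ← h M, Sum.elim_comp_map, Sum.elim_comp_map]
    rfl
  exact ⟨n, (key _).1 (ha n y ((key y).2 hy))⟩

theorem exists_surjective_same_type {Φ : ∀ n : ℕ, L.Formula (Fin n ⊕ Unit)} (hΦ : IsRich Φ)
    (T : L.Theory) {M : Type} [L.Structure M] [T.Model M] {a : ℕ → M} (ha : RealizesD Φ a) :
    ∃ (N : Type) (_ : L.Structure N) (_ : T.Model N) (_ : Countable N) (b : ℕ → N),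
      Function.Surjective b ∧ RealizesD Φ b ∧ ∀ φ : L.Formula ℕ, φ.Realize b ↔ φ.Realize a := by
  let S : L.Substructure M :=
    { carrier := Set.range a
      fun_mem := by
        intro k f v hv
        choose idx hidx using hv
        obtain ⟨n, hn⟩ := exists_witness hΦ ha
          (Term.equal (Term.func f (fun i => Term.var (Sum.inl (idx i))))
            (Term.var (Sum.inr ()))) (Structure.funMap f v) (by
              simp [Formula.realize_equal, hidx])
        refine ⟨n, ?_⟩
        simpa [Formula.realize_equal, hidx] using hn.symm }
  have hS : S.IsElementary := by
    refine Substructure.isElementary_of_exists S ?_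
    intro n φ x y hy
    have hx : ∀ i, ∃ j, a j = (x i : M) := fun i => (x i).2
    choose j hj using hx
    let g : Empty ⊕ Fin (n + 1) → ℕ ⊕ Unit :=
      Sum.elim Empty.elim (Fin.snoc (α := fun _ => ℕ ⊕ Unit) (fun i => Sum.inl (j i)) (Sum.inr ()))
    have key : ∀ z : M, (φ.toFormula.relabel g).Realize (Sum.elim a (fun _ => z)) ↔
        φ.Realize default (Fin.snoc ((↑) ∘ x) z : _ → M) := by
      intro z
      rw [Formula.realize_relabel, BoundedFormula.realize_toFormula]
      have e1 : ((Sum.elim a fun _ => z) ∘ g) ∘ Sum.inl = (default : Empty → M) :=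
        Subsingleton.elim _ _
      have e2 : ((Sum.elim a fun _ => z) ∘ g) ∘ Sum.inr = (Fin.snoc ((↑) ∘ x) z : _ → M) := by
        funext i
        refine Fin.lastCases ?_ (fun i => ?_) i
        · simp [g]
        · simp [g, hj]
      rw [e1, e2]
    obtain ⟨m, hm⟩ := exists_witness hΦ ha (φ.toFormula.relabel g) y ((key y).2 hy)
    exact ⟨⟨a m, m, rfl⟩, (key _).1 hm⟩
  let S' : L.ElementarySubstructure M := ⟨S, hS⟩
  have hmem : ∀ n, a n ∈ S' := fun n => ⟨n, rfl⟩
  let b : ℕ → S' := fun n => ⟨a n, hmem n⟩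
  have hsurj : Function.Surjective b := by
    rintro ⟨_, n, rfl⟩
    exact ⟨n, rfl⟩
  have hreal : ∀ {α : Type} (φ : L.Formula α) (x : α → S'),
      φ.Realize x ↔ φ.Realize (Subtype.val ∘ x) := fun φ x => (S'.subtype.map_formula φ x).symm
  refine ⟨S', inferInstance, inferInstance, hsurj.countable, b, hsurj, ?_, ?_⟩
  · intro k y hy
    rw [hreal] at hy ⊢
    rw [Sum.comp_elim] at hy ⊢
    exact ha k y.1 hy
  · intro φ
    exact hreal φ b

theorem exists_iso {α : Type} {M N : Type} [L.Structure M] [L.Structure N]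
    {x : α → M} {y : α → N} (hx : Function.Surjective x) (hy : Function.Surjective y)
    (h : tpFun (L := L) x = tpFun y) :
    ∃ f : M ≃[L] N, ∀ i, f (x i) = y i := by
  rw [tpFun_eq_iff] at h
  have heq : ∀ i j, x i = x j ↔ y i = y j := by
    intro i j
    simpa [Formula.realize_equal] using h (Term.equal (Term.var i) (Term.var j))
  let f : M → N := fun m => y (Function.surjInv hx m)
  have hf : ∀ i, f (x i) = y i := fun i => (heq _ _).1 (Function.surjInv_eq hx (x i))
  have hbij : Function.Bijective f := by
    constructor
    · intro m m' hm
      obtain ⟨i, rfl⟩ := hx m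
      obtain ⟨j, rfl⟩ := hx m'
      rw [hf, hf] at hm
      exact (heq _ _).2 hm
    · intro n
      obtain ⟨i, rfl⟩ := hy n
      exact ⟨x i, hf i⟩
  refine ⟨{ Equiv.ofBijective f hbij with
    map_fun' := ?_
    map_rel' := ?_ }, hf⟩
  · intro n F v
    choose u hu using fun i => hx (v i)
    obtain ⟨j, hj⟩ := hx (Structure.funMap F v)
    have := h (Term.equal (Term.func F (fun i => Term.var (u i))) (Term.var j))
    simp only [Formula.realize_equal, Term.realize_func, Term.realize_var, hu, hj] at this
    have h2 : f ∘ v = fun i => y (u i) := by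
      funext i
      rw [← hf, hu]; rfl
    show f (Structure.funMap F v) = Structure.funMap F (f ∘ v)
    rw [← hj, hf, h2]
    exact (this.1 trivial).symm
  · intro n R v
    choose u hu using fun i => hx (v i)
    have := h (R.formula (fun i => Term.var (u i)))
    simp only [Formula.realize_rel, Term.realize_var, hu] at this
    have h2 : f ∘ v = fun i => y (u i) := by
      funext i
      rw [← hf, hu]; rfl
    show Structure.RelMap R (f ∘ v) ↔ _
    rw [h2]
    exact this.symm

theorem iso_realize {α : Type} {M N : Type} [L.Structure M] [L.Structure N]
    (f : M ≃[L] N) (φ : L.Formula α) (x : α → M) : φ.Realize (f ∘ x) ↔ φ.Realize x :=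
  f.toElementaryEmbedding.map_formula φ x

theorem iso_realizesD {M N : Type} [L.Structure M] [L.Structure N]
    {Φ : ∀ n : ℕ, L.Formula (Fin n ⊕ Unit)}
    (f : M ≃[L] N) {a : ℕ → M} (ha : RealizesD Φ a) : RealizesD Φ (f ∘ a) := by
  intro k y hy
  have h := ha k (f.symm y)
  rw [← iso_realize f, ← iso_realize f, Sum.comp_elim, Sum.comp_elim] at h
  have e : (f ∘ fun _ : Unit => f.symm y) = fun _ => y := funext fun _ => by simp
  rw [e] at h
  exact h hy

/-- Partial realization of `D_Φ` for a full sequence. -/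
def DBelow (Φ : ∀ n : ℕ, L.Formula (Fin n ⊕ Unit)) {M : Type} [L.Structure M] (n : ℕ)
    (a : ℕ → M) : Prop :=
  ∀ k < n, ∀ y : M,
    (Φ k).Realize (Sum.elim (fun i : Fin k => a i) (fun _ => y)) →
    (Φ k).Realize (Sum.elim (fun i : Fin k => a i) (fun _ => a k))

/-- Course-of-values recursion. -/
def seqRec {M : Type} (G : ∀ k : ℕ, (Fin k → M) → M) (k : ℕ) : M :=
  G k (fun i => seqRec G i.1)
decreasing_by exact i.2

theorem exists_enumeration {Φ : ∀ n : ℕ, L.Formula (Fin n ⊕ Unit)} (hΦ : IsRich Φ)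
    {M : Type} [L.Structure M] [Countable M] (n : ℕ) (c : ℕ → M) (hc : DBelow Φ n c) :
    ∃ a : ℕ → M, Function.Surjective a ∧ RealizesD Φ a ∧ ∀ i < n, a i = c i := by
  classical
  have : Nonempty M := ⟨c 0⟩
  let P : Set ℕ := {k | n ≤ k ∧ ∀ v : Fin k ⊕ Unit → M, (Φ k).Realize v}
  have hP : P.Infinite := by
    refine Set.infinite_of_forall_exists_gt (fun m => ?_)
    obtain ⟨k, hk, e⟩ := hΦ (max n m + 1) ⊤
    refine ⟨k, ⟨by omega, fun v => ?_⟩, by omega⟩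
    rw [e, Formula.realize_relabel]
    exact Formula.realize_top.2 trivial
  have := hP.to_subtype
  obtain ⟨e, he⟩ := exists_injective_nat M
  let e' : M → P := fun m => Infinite.natEmbedding P (e m)
  have he' : Function.Injective e' := (Infinite.natEmbedding P).injective.comp he
  let t : ℕ → M := fun k => if h : k ∈ P then Function.invFun e' ⟨k, h⟩ else c 0
  have ht : ∀ m : M, t (e' m) = m := by
    intro m
    simp only [t, Subtype.coe_prop, dif_pos]
    exact Function.leftInverse_invFun he' m
  have hF : ∀ (k : ℕ) (p : Fin k → M), ∃ y : M,
      (∀ y', (Φ k).Realize (Sum.elim p (fun _ => y')) → (Φ k).Realize (Sum.elim p (fun _ => y))) ∧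
      ((Φ k).Realize (Sum.elim p (fun _ => t k)) → y = t k) := by
    intro k p
    by_cases h1 : (Φ k).Realize (Sum.elim p (fun _ => t k))
    · exact ⟨t k, fun _ _ => h1, fun _ => rfl⟩
    · by_cases h2 : ∃ y', (Φ k).Realize (Sum.elim p (fun _ => y'))
      · obtain ⟨y', hy'⟩ := h2
        exact ⟨y', fun _ _ => hy', fun h => absurd h h1⟩
      · exact ⟨t k, fun y' hy' => absurd ⟨y', hy'⟩ h2, fun _ => rfl⟩
  choose F hF1 hF2 using hF
  let a : ℕ → M := seqRec (fun k p => if k < n then c k else F k p)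
  have ha : ∀ k, a k = if k < n then c k else F k (fun i => a i) := by
    intro k
    simp only [a]
    rw [seqRec]
  have hlow : ∀ i < n, a i = c i := fun i hi => by rw [ha, if_pos hi]
  refine ⟨a, ?_, ?_, hlow⟩
  · intro m
    have hm := (e' m).2
    refine ⟨e' m, ?_⟩
    rw [ha, if_neg (by have := hm.1; omega), hF2 _ _ (hm.2 _), ht]
  · intro k y hy
    by_cases hk : k < n
    · have e : (fun i : Fin k => a i) = fun i : Fin k => c i := by
        funext i
        exact hlow _ (i.2.trans hk)
      rw [hlow k hk, e]
      rw [e] at hy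
      exact hc k hk y hy
    · rw [ha k, if_neg hk]
      exact hF1 k _ y hy

theorem exists_countable_model [Countable L.Symbols] {N : Type w} [L.Structure N] [Nonempty N]
    {α : Type} [Countable α] (a : α → N) :
    ∃ (M : Type) (_ : L.Structure M) (_ : Countable M) (f : M ↪ₑ[L] N) (b : α → M),
      ∀ i, f (b i) = a i := by
  have hS : ∃ S : L.ElementarySubstructure N, Countable S ∧ ∀ i, a i ∈ S := by
    rcases finite_or_infinite N with hN | hN
    · exact ⟨⊤, inferInstance, fun i => ElementarySubstructure.mem_top _⟩
    · obtain ⟨S, hS1, hS2⟩ := exists_elementarySubstructure_card_eq.{_, _, _, 0} L (Set.range a)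
        Cardinal.aleph0 le_rfl
        (by simpa using (Set.countable_range a).le_aleph0)
        (by
          have : L.card ≤ Cardinal.aleph0 := Cardinal.mk_le_aleph0_iff.2 ‹Countable L.Symbols›
          simpa using this)
        (by simp)
      refine ⟨S, ?_, fun i => hS1 ⟨i, rfl⟩⟩
      rw [← Cardinal.mk_le_aleph0_iff]
      simp at hS2
      exact hS2.le
  obtain ⟨S, hc, hS⟩ := hS
  let e : S ≃ Shrink.{0} S := equivShrink.{0} S
  let _ : L.Structure (Shrink.{0} S) := e.inducedStructure
  let e' : S ≃[L] Shrink.{0} S := e.inducedStructureEquiv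
  refine ⟨Shrink.{0} S, inferInstance, e.symm.injective.countable,
    S.subtype.comp e'.symm.toElementaryEmbedding, fun i => e' ⟨a i, hS i⟩, fun i => ?_⟩
  simp

theorem compact_cover [Countable L.Symbols] (T : L.Theory) {α : Type} [Countable α] [Nonempty α]
    (Γ : Set (L.Formula α)) {ι : Type*} (Θ : ι → L.Formula α)
    (h : ∀ (M : Type) [L.Structure M] [T.Model M] [Countable M] (a : α → M),
      (∀ φ ∈ Γ, φ.Realize a) → ∃ i, (Θ i).Realize a) :
    ∃ s : Finset ι, ∀ (M : Type) [L.Structure M] [T.Model M] [Countable M] (a : α → M),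
      (∀ φ ∈ Γ, φ.Realize a) → ∃ i ∈ s, (Θ i).Realize a := by
  classical
  by_contra hcon
  push Not at hcon
  have : Nonempty ι := by
    obtain ⟨M, _, _, _, a, ha, -⟩ := hcon ∅
    exact ⟨(h M a ha).choose⟩
  let T' : L[[α]].Theory := (L.lhomWithConstants α).onTheory T ∪
    Formula.equivSentence '' Γ ∪ Set.range (fun i => Formula.equivSentence (Θ i).not)
  have hsat : T'.IsSatisfiable := by
    rw [Theory.isSatisfiable_iff_isFinitelySatisfiable]
    intro T0 hT0
    have : ∃ s : Finset ι, (T0 : Set (L[[α]].Sentence)) ⊆ (L.lhomWithConstants α).onTheory T ∪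
        Formula.equivSentence '' Γ ∪ (fun i => Formula.equivSentence (Θ i).not) '' (s : Set ι) := by
      choose! j hj using fun (φ : L[[α]].Sentence)
        (hφ : φ ∈ Set.range (fun i => Formula.equivSentence (Θ i).not)) => hφ
      refine ⟨(T0.filter (fun φ => φ ∈ Set.range
        (fun i => Formula.equivSentence (Θ i).not))).image j, fun φ hφ => ?_⟩
      rcases hT0 hφ with h | h
      · exact Or.inl h
      · refine Or.inr ⟨j φ, ?_, hj φ h⟩
        exact Finset.mem_coe.2 (Finset.mem_image_of_mem j (Finset.mem_filter.2 ⟨hφ, h⟩))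
    obtain ⟨s, hs⟩ := this
    obtain ⟨M, _, _, _, a, ha1, ha2⟩ := hcon s
    have : Nonempty M := ‹Nonempty α›.map a
    let _ := constantsOn.structure a
    have hcon' : (fun i : α => ((L.con i : L[[α]].Constants) : M)) = a := by
      funext i
      rfl
    have : M ⊨ (T0 : L[[α]].Theory) := by
      rw [Theory.model_iff]
      intro φ hφ
      rcases hs hφ with (hφ | ⟨ψ, hψ, rfl⟩) | ⟨i, hi, rfl⟩
      · have : M ⊨ (L.lhomWithConstants α).onTheory T :=
          (LHom.onTheory_model _ T).2 inferInstance
        exact this.realize_of_mem φ hφ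
      · rw [Formula.realize_equivSentence, hcon']
        exact ha1 ψ hψ
      · rw [Formula.realize_equivSentence, hcon', Formula.realize_not]
        exact ha2 i hi
    exact Theory.Model.isSatisfiable M
  obtain ⟨N⟩ := hsat
  let _ : L.Structure N := (L.lhomWithConstants α).reduct N
  have hN : ∀ φ ∈ T', N ⊨ φ := fun φ hφ => N.is_model.realize_of_mem φ hφ
  have hT : N ⊨ T := by
    rw [← LHom.onTheory_model (L.lhomWithConstants α), Theory.model_iff]
    exact fun φ hφ => hN φ (Or.inl (Or.inl hφ))
  obtain ⟨M, _, _, f, b, hb⟩ := exists_countable_model (L := L) (N := N)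
    (fun i : α => ((L.con i : L[[α]].Constants) : N))
  have hb' : f ∘ b = (fun i : α => ((L.con i : L[[α]].Constants) : N)) := funext hb
  have : T.Model M := (f.theory_model_iff T).2 hT
  obtain ⟨i, hi⟩ := h M b (fun φ hφ => by
    rw [← f.map_formula, hb', ← Formula.realize_equivSentence]
    exact hN _ (Or.inl (Or.inr ⟨φ, hφ, rfl⟩)))
  have := hN _ (Or.inr ⟨i, rfl⟩)
  rw [Formula.realize_equivSentence, Formula.realize_not, ← hb', f.map_formula] at this
  exact this hi

theorem exists_nhd_formula {α : Type} {U : Set (L.Formula α → Bool)} (hU : IsOpen U)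
    {M : Type} [L.Structure M] (x : α → M) (hx : tpFun x ∈ U) :
    ∃ φ : L.Formula α, φ.Realize x ∧
      ∀ (N : Type) [L.Structure N] (y : α → N), φ.Realize y → tpFun y ∈ U := by
  classical
  obtain ⟨I, u, hu, hsub⟩ := isOpen_pi_iff.1 hU _ hx
  refine ⟨Formula.iInf (fun i : I => if i.1.Realize x then i.1 else i.1.not), ?_, ?_⟩
  · rw [Formula.realize_iInf]
    intro i
    by_cases h : i.1.Realize x
    · rw [if_pos h]; exact h
    · rw [if_neg h]; exact Formula.realize_not.2 h
  · intro N _ y hy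
    rw [Formula.realize_iInf] at hy
    refine hsub (fun i hi => ?_)
    have h1 := hy ⟨i, hi⟩
    have : tpFun y i = tpFun x i := by
      rw [Bool.eq_iff_iff, tpFun_eq_true_iff, tpFun_eq_true_iff]
      by_cases h : i.Realize x
      · simp only [if_pos h] at h1
        exact iff_of_true h1 h
      · simp only [if_neg h] at h1
        exact iff_of_false (Formula.realize_not.1 h1) h
    rw [this]
    exact (hu i hi).2

/-- The `k`-th formula of `D_Φ`. -/
noncomputable def dF (Φ : ∀ n : ℕ, L.Formula (Fin n ⊕ Unit)) (k : ℕ) : L.Formula ℕ :=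
  Formula.iAlls Unit (((Φ k).relabel (Sum.map Fin.val id)).imp
    ((Φ k).relabel (Sum.elim (fun i => Sum.inl i.1) (fun _ => Sum.inl k))))

theorem realize_dF {Φ : ∀ n : ℕ, L.Formula (Fin n ⊕ Unit)} {M : Type} [L.Structure M]
    (k : ℕ) (a : ℕ → M) : (dF Φ k).Realize a ↔ ∀ y : M,
    (Φ k).Realize (Sum.elim (fun i : Fin k => a i) (fun _ => y)) →
    (Φ k).Realize (Sum.elim (fun i : Fin k => a i) (fun _ => a k)) := by
  have key : ∀ i : Unit → M, ((Sum.elim a i) ∘ (Sum.elim (fun i : Fin k => Sum.inl i.1)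
      (fun _ : Unit => Sum.inl k))) = Sum.elim (fun i : Fin k => a i) (fun _ => a k) := by
    intro i
    funext j
    rcases j with j | j <;> rfl
  rw [dF, Formula.realize_iAlls]
  simp only [Formula.realize_imp, Formula.realize_relabel, Sum.elim_comp_map, key]
  constructor
  · intro h y
    exact h (fun _ => y)
  · intro h i
    exact h (i ())

theorem realizesD_iff {Φ : ∀ n : ℕ, L.Formula (Fin n ⊕ Unit)} {M : Type} [L.Structure M]
    (a : ℕ → M) : RealizesD Φ a ↔ ∀ k, (dF Φ k).Realize a := by
  simp only [realize_dF]
  rfl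

theorem dBelow_iff {Φ : ∀ n : ℕ, L.Formula (Fin n ⊕ Unit)} {M : Type} [L.Structure M] (n : ℕ)
    (a : ℕ → M) : DBelow Φ n a ↔ (Formula.iInf (fun k : Fin n => dF Φ k)).Realize a := by
  simp only [Formula.realize_iInf, realize_dF]
  exact ⟨fun h k => h k k.2, fun h k hk => h ⟨k, hk⟩⟩

theorem RealizesD.dBelow {Φ : ∀ n : ℕ, L.Formula (Fin n ⊕ Unit)} {M : Type} [L.Structure M]
    {a : ℕ → M} (h : RealizesD Φ a) (n : ℕ) : DBelow Φ n a := fun k _ => h k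

theorem exists_proj (χ : L.Formula (ℕ ⊕ ℕ)) (n : ℕ) :
    ∃ θ : L.Formula (Fin n ⊕ Fin n), ∀ (M : Type) [L.Structure M] (a b : ℕ → M),
      RealizePair θ a b ↔ ∃ a' b' : ℕ → M, (∀ i < n, a' i = a i) ∧ (∀ i < n, b' i = b i) ∧
        χ.Realize (Sum.elim a' b') := by
  classical
  obtain ⟨m, hm⟩ := exists_pair_restrict χ
  obtain ⟨χ', hχ'⟩ := hm m le_rfl
  let g : Fin m ⊕ Fin m → (Fin n ⊕ Fin n) ⊕ (Fin m ⊕ Fin m) :=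
    Sum.elim (fun i => if h : i.1 < n then Sum.inl (Sum.inl ⟨i, h⟩) else Sum.inr (Sum.inl i))
      (fun i => if h : i.1 < n then Sum.inl (Sum.inr ⟨i, h⟩) else Sum.inr (Sum.inr i))
  refine ⟨(χ'.relabel g).iExs _, fun M _ a b => ?_⟩
  rw [RealizePair, Formula.realize_iExs]
  simp only [Formula.realize_relabel]
  constructor
  · rintro ⟨v, hv⟩
    refine ⟨fun i => if i < n then a i else if h : i < m then v (Sum.inl ⟨i, h⟩) else a i,
      fun i => if i < n then b i else if h : i < m then v (Sum.inr ⟨i, h⟩) else b i,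
      fun i hi => by simp [hi], fun i hi => by simp [hi], ?_⟩
    rw [← hχ', RealizePair]
    convert hv using 1
    funext j
    rcases j with j | j <;> by_cases h : j.1 < n <;> simp [g, h]
  · rintro ⟨a', b', ha, hb, h⟩
    refine ⟨Sum.elim (fun i => a' i) (fun i => b' i), ?_⟩
    rw [← hχ', RealizePair] at h
    convert h using 1
    funext j
    rcases j with j | j <;> by_cases h : j.1 < n <;> simp [g, h, ha, hb]

theorem realizePair_congr {n : ℕ} (E : L.Formula (Fin n ⊕ Fin n)) {M : Type} [L.Structure M]
    {a b a' b' : ℕ → M} (ha : ∀ i < n, a' i = a i) (hb : ∀ i < n, b' i = b i) :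
    RealizePair E a' b' ↔ RealizePair E a b := by
  have e1 : (fun i : Fin n => a' i) = fun i : Fin n => a i := funext fun i => ha i i.2
  have e2 : (fun i : Fin n => b' i) = fun i : Fin n => b i := funext fun i => hb i i.2
  rw [RealizePair, RealizePair, e1, e2]

theorem realizePair_iff {n : ℕ} (E : L.Formula (Fin n ⊕ Fin n)) {M : Type} [L.Structure M]
    (a b : ℕ → M) : (E.relabel (Sum.map (Fin.val) (Fin.val))).Realize (Sum.elim a b) ↔
      RealizePair E a b := by
  rw [Formula.realize_relabel, Sum.elim_comp_map]
  rfl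

theorem mem_fmlPairSet_tpFun {T : L.Theory} {Φ : ∀ n : ℕ, L.Formula (Fin n ⊕ Unit)} {n : ℕ}
    (E : L.Formula (Fin n ⊕ Fin n)) {M : Type} [L.Structure M] (a b : ℕ → M) :
    tpFun (Sum.elim a b) ∈ FmlPairSet T Φ n E ↔
      tpFun (Sum.elim a b) ∈ GPhi T Φ ∧ RealizePair E a b := by
  rw [FmlPairSet, Set.mem_ofPred_eq, tpFun_eq_true_iff, realizePair_iff]

theorem exists_theta {Φ : ∀ n : ℕ, L.Formula (Fin n ⊕ Unit)} (hΦ : IsRich Φ) (T : L.Theory)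
    {U : Set (L.Formula (ℕ ⊕ ℕ) → Bool)} (hU : IsOpen U) (n : ℕ)
    (sat : ∀ (M : Type) [L.Structure M] [T.Model M] [Countable M] (c d c' d' : ℕ → M),
      Function.Surjective c → Function.Surjective d →
      Function.Surjective c' → Function.Surjective d' →
      RealizesD Φ c → RealizesD Φ d → RealizesD Φ c' → RealizesD Φ d' →
      (∀ i < n, c' i = c i) → (∀ i < n, d' i = d i) →
      tpFun (Sum.elim c' d') ∈ U → tpFun (Sum.elim c d) ∈ U)
    {M : Type} [L.Structure M] {a b : ℕ → M} (ha : RealizesD Φ a) (hb : RealizesD Φ b)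
    (hab : tpFun (Sum.elim a b) ∈ U) :
    ∃ θ : L.Formula (Fin n ⊕ Fin n), RealizePair θ a b ∧
      ∀ (N : Type) [L.Structure N] [T.Model N] [Countable N] (c d : ℕ → N),
        Function.Surjective c → Function.Surjective d → RealizesD Φ c → RealizesD Φ d →
        RealizePair θ c d → tpFun (Sum.elim c d) ∈ U := by
  obtain ⟨χ, hχ1, hχ2⟩ := exists_nhd_formula hU _ hab
  obtain ⟨m0, hm0⟩ := exists_pair_restrict χ
  let m := max m0 n
  obtain ⟨χ', hχ'⟩ := hm0 m (le_max_left _ _)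
  let δ : L.Formula ℕ := Formula.iInf (fun k : Fin m => dF Φ k)
  obtain ⟨θ, hθ⟩ := exists_proj (χ ⊓ (δ.relabel Sum.inl ⊓ δ.relabel Sum.inr)) n
  refine ⟨θ, ?_, ?_⟩
  · rw [hθ]
    refine ⟨a, b, fun _ _ => rfl, fun _ _ => rfl, ?_⟩
    simp only [Formula.realize_inf, Formula.realize_relabel, Sum.elim_comp_inl, Sum.elim_comp_inr]
    exact ⟨hχ1, (dBelow_iff m a).1 (ha.dBelow m), (dBelow_iff m b).1 (hb.dBelow m)⟩
  · intro N _ _ _ c d hc hd hc' hd' h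
    rw [hθ] at h
    obtain ⟨c1, d1, hc1, hd1, h⟩ := h
    simp only [Formula.realize_inf, Formula.realize_relabel, Sum.elim_comp_inl,
      Sum.elim_comp_inr] at h
    obtain ⟨h1, h2, h3⟩ := h
    obtain ⟨c2, hc2, hc2', hc2e⟩ := exists_enumeration hΦ m c1 ((dBelow_iff m c1).2 h2)
    obtain ⟨d2, hd2, hd2', hd2e⟩ := exists_enumeration hΦ m d1 ((dBelow_iff m d1).2 h3)
    have hnm : n ≤ m := le_max_right _ _
    refine sat N c d c2 d2 hc hd hc2 hd2 hc' hd' hc2' hd2'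
      (fun i hi => (hc2e i (by omega)).trans (hc1 i hi))
      (fun i hi => (hd2e i (by omega)).trans (hd1 i hi)) ?_
    apply hχ2
    rw [← hχ', realizePair_congr χ' hc2e hd2e, hχ']
    exact h1

theorem surj_part [Countable L.Symbols] (T : L.Theory)
    (Φ : ∀ n : ℕ, L.Formula (Fin n ⊕ Unit)) (hΦ : IsRich Φ)
    (H : Set (L.Formula (ℕ ⊕ ℕ) → Bool)) (hHG : H ⊆ GPhi T Φ)
    (hopen : ∃ U, IsOpen U ∧ H = U ∩ GPhi T Φ)
    (hclosed : ∃ C, IsClosed C ∧ H = C ∩ GPhi T Φ)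
    (hprod : prodSet T Φ H (invSet T Φ H) = H)
    (hbase : basePairs T Φ ⊆ H) :
    ∃ (n : ℕ) (E : L.Formula (Fin n ⊕ Fin n)),
        IsDefEquivRel T Φ n E ∧ H = FmlPairSet T Φ n E := by
  classical
  obtain ⟨U, hU, hHU⟩ := hopen
  obtain ⟨C, hC, hHC⟩ := hclosed
  have memG : ∀ (M : Type) [L.Structure M] [T.Model M] [Countable M] (a b : ℕ → M),
      Function.Surjective a → Function.Surjective b → RealizesD Φ a → RealizesD Φ b →
      tpFun (Sum.elim a b) ∈ GPhi T Φ := fun M i1 i2 i3 a b h1 h2 h3 h4 =>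
    ⟨M, i1, i2, i3, a, b, h1, h2, h3, h4, rfl⟩
  have hrefl : ∀ (M : Type) [L.Structure M] [T.Model M] [Countable M] (a : ℕ → M),
      Function.Surjective a → RealizesD Φ a → tpFun (Sum.elim a a) ∈ H :=
    fun M i1 i2 i3 a h1 h2 => hbase ⟨M, i1, i2, i3, a, h1, h2, rfl⟩
  have hsymm : ∀ (M : Type) [L.Structure M] [T.Model M] [Countable M] (a b : ℕ → M),
      Function.Surjective a → Function.Surjective b → RealizesD Φ a → RealizesD Φ b →
      tpFun (Sum.elim a b) ∈ H → tpFun (Sum.elim b a) ∈ H := by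
    intro M i1 i2 i3 a b h1 h2 h3 h4 h
    rw [← hprod]
    exact ⟨M, i1, i2, i3, b, b, a, h2, h2, h1, h4, h4, h3, hrefl M b h2 h4,
      ⟨M, i1, i2, i3, a, b, h1, h2, h3, h4, h, rfl⟩, rfl⟩
  have htrans : ∀ (M : Type) [L.Structure M] [T.Model M] [Countable M] (a b c : ℕ → M),
      Function.Surjective a → Function.Surjective b → Function.Surjective c →
      RealizesD Φ a → RealizesD Φ b → RealizesD Φ c →
      tpFun (Sum.elim a b) ∈ H → tpFun (Sum.elim b c) ∈ H → tpFun (Sum.elim a c) ∈ H := by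
    intro M i1 i2 i3 a b c h1 h2 h3 h4 h5 h6 hab hbc
    rw [← hprod]
    exact ⟨M, i1, i2, i3, a, b, c, h1, h2, h3, h4, h5, h6, hab,
      ⟨M, i1, i2, i3, c, b, h3, h2, h6, h5, hsymm M b c h2 h3 h5 h6 hbc, rfl⟩, rfl⟩
  -- Step 1: some `Eⁿ` is contained in `H`
  have step1 : ∃ n : ℕ, ∀ (M : Type) [L.Structure M] [T.Model M] [Countable M] (a b : ℕ → M),
      Function.Surjective a → Function.Surjective b → RealizesD Φ a → RealizesD Φ b →
      (∀ i < n, a i = b i) → tpFun (Sum.elim a b) ∈ H := by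
    let ι := {φ : L.Formula (ℕ ⊕ ℕ) // ∀ (N : Type) [L.Structure N] (y : ℕ ⊕ ℕ → N),
      φ.Realize y → tpFun y ∈ U}
    obtain ⟨s, hs⟩ := compact_cover T (Set.range (dF Φ))
      (fun φ : ι => φ.1.relabel (Sum.elim id id)) (by
        intro M i1 i2 i3 a ha
        have haD : RealizesD Φ a := (realizesD_iff a).2 (fun k => ha _ ⟨k, rfl⟩)
        obtain ⟨N, j1, j2, j3, b, hb, hbD, htp⟩ := exists_surjective_same_type hΦ T haD
        have hbH := hrefl N b hb hbD
        rw [hHU] at hbH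
        obtain ⟨φ, h1, h2⟩ := exists_nhd_formula hU _ hbH.1
        refine ⟨⟨φ, h2⟩, ?_⟩
        rw [← htp, Formula.realize_relabel, Sum.comp_elim]
        exact h1)
    choose m hm using fun φ : L.Formula (ℕ ⊕ ℕ) => exists_pair_restrict φ
    refine ⟨s.sup (fun φ => m φ.1), fun M i1 i2 i3 a b h1 h2 h3 h4 hab => ?_⟩
    obtain ⟨φ, hφ, hr⟩ := hs M a (by
      rintro _ ⟨k, rfl⟩
      exact (realizesD_iff a).1 h3 k)
    rw [Formula.realize_relabel, Sum.comp_elim] at hr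
    obtain ⟨φ', hφ'⟩ := hm φ.1 _ (Finset.le_sup (f := fun φ : ι => m φ.1) hφ)
    rw [hHU]
    refine ⟨φ.2 M _ ?_, memG M a b h1 h2 h3 h4⟩
    rw [← hφ', realizePair_congr φ' (a := a) (b := a) (fun _ _ => rfl)
      (fun i hi => (hab i hi).symm), hφ']
    exact hr
  obtain ⟨n, hn⟩ := step1
  have hsat : ∀ (M : Type) [L.Structure M] [T.Model M] [Countable M] (c d c' d' : ℕ → M),
      Function.Surjective c → Function.Surjective d →
      Function.Surjective c' → Function.Surjective d' →
      RealizesD Φ c → RealizesD Φ d → RealizesD Φ c' → RealizesD Φ d' →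
      (∀ i < n, c' i = c i) → (∀ i < n, d' i = d i) →
      tpFun (Sum.elim c' d') ∈ H → tpFun (Sum.elim c d) ∈ H := by
    intro M i1 i2 i3 c d c' d' h1 h2 h3 h4 k1 k2 k3 k4 hc hd h
    have e1 := hn M c c' h1 h3 k1 k3 (fun i hi => (hc i hi).symm)
    have e2 := hn M d' d h4 h2 k4 k2 hd
    exact htrans M c c' d h1 h3 h2 k1 k3 k2 e1 (htrans M c' d' d h3 h4 h2 k3 k4 k2 h e2)
  -- Step 2: covering by formulas in the first `n` variables
  let P : L.Formula (Fin n ⊕ Fin n) → Prop := fun θ =>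
    ∀ (N : Type) [L.Structure N] [T.Model N] [Countable N] (c d : ℕ → N),
      Function.Surjective c → Function.Surjective d → RealizesD Φ c → RealizesD Φ d →
      RealizePair θ c d → tpFun (Sum.elim c d) ∈ H
  let Q : L.Formula (Fin n ⊕ Fin n) → Prop := fun θ =>
    ∀ (N : Type) [L.Structure N] [T.Model N] [Countable N] (c d : ℕ → N),
      Function.Surjective c → Function.Surjective d → RealizesD Φ c → RealizesD Φ d →
      RealizePair θ c d → tpFun (Sum.elim c d) ∉ H
  have hUH : ∀ (M : Type) [L.Structure M] [T.Model M] [Countable M] (a b : ℕ → M),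
      Function.Surjective a → Function.Surjective b → RealizesD Φ a → RealizesD Φ b →
      (tpFun (Sum.elim a b) ∈ U ↔ tpFun (Sum.elim a b) ∈ H) := by
    intro M _ _ _ a b h1 h2 h3 h4
    rw [hHU]
    exact ⟨fun h => ⟨h, memG M a b h1 h2 h3 h4⟩, fun h => h.1⟩
  have hCH : ∀ (M : Type) [L.Structure M] [T.Model M] [Countable M] (a b : ℕ → M),
      Function.Surjective a → Function.Surjective b → RealizesD Φ a → RealizesD Φ b →
      (tpFun (Sum.elim a b) ∈ Cᶜ ↔ tpFun (Sum.elim a b) ∉ H) := by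
    intro M _ _ _ a b h1 h2 h3 h4
    rw [hHC, Set.mem_compl_iff, not_iff_not]
    exact ⟨fun h => ⟨h, memG M a b h1 h2 h3 h4⟩, fun h => h.1⟩
  have cover : ∀ (M : Type) [L.Structure M] [T.Model M] [Countable M] (a b : ℕ → M),
      RealizesD Φ a → RealizesD Φ b →
      ∃ θ : {θ : L.Formula (Fin n ⊕ Fin n) // P θ ∨ Q θ}, RealizePair θ.1 a b := by
    intro M _ _ _ a b ha hb
    obtain ⟨a', ha1, ha2, ha3⟩ := exists_enumeration hΦ n a (ha.dBelow n)
    obtain ⟨b', hb1, hb2, hb3⟩ := exists_enumeration hΦ n b (hb.dBelow n)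
    by_cases h : tpFun (Sum.elim a' b') ∈ H
    · obtain ⟨θ, h1, h2⟩ := exists_theta hΦ T hU n (by
        intro M _ _ _ c d c' d' g1 g2 g3 g4 k1 k2 k3 k4 hc hd h
        rw [hUH M c d g1 g2 k1 k2]
        rw [hUH M c' d' g3 g4 k3 k4] at h
        exact hsat M c d c' d' g1 g2 g3 g4 k1 k2 k3 k4 hc hd h) ha2 hb2
        ((hUH M a' b' ha1 hb1 ha2 hb2).2 h)
      refine ⟨⟨θ, Or.inl ?_⟩, (realizePair_congr θ ha3 hb3).1 h1⟩
      intro N _ _ _ c d g1 g2 k1 k2 hr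
      exact (hUH N c d g1 g2 k1 k2).1 (h2 N c d g1 g2 k1 k2 hr)
    · obtain ⟨θ, h1, h2⟩ := exists_theta hΦ T hC.isOpen_compl n (by
        intro M _ _ _ c d c' d' g1 g2 g3 g4 k1 k2 k3 k4 hc hd h
        rw [hCH M c d g1 g2 k1 k2]
        rw [hCH M c' d' g3 g4 k3 k4] at h
        intro h'
        exact h (hsat M c' d' c d g3 g4 g1 g2 k3 k4 k1 k2 (fun i hi => (hc i hi).symm)
          (fun i hi => (hd i hi).symm) h')) ha2 hb2
        ((hCH M a' b' ha1 hb1 ha2 hb2).2 h)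
      refine ⟨⟨θ, Or.inr ?_⟩, (realizePair_congr θ ha3 hb3).1 h1⟩
      intro N _ _ _ c d g1 g2 k1 k2 hr
      exact (hCH N c d g1 g2 k1 k2).1 (h2 N c d g1 g2 k1 k2 hr)
  obtain ⟨s, hs⟩ := compact_cover T
    (Set.range (fun k => (dF Φ k).relabel (Sum.inl : ℕ → ℕ ⊕ ℕ)) ∪
      Set.range (fun k => (dF Φ k).relabel (Sum.inr : ℕ → ℕ ⊕ ℕ)))
    (fun θ : {θ : L.Formula (Fin n ⊕ Fin n) // P θ ∨ Q θ} =>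
      θ.1.relabel (Sum.map (Fin.val) (Fin.val))) (by
      intro M _ _ _ x hx
      have e : x = Sum.elim (x ∘ Sum.inl) (x ∘ Sum.inr) := by
        rw [Sum.elim_comp_inl_inr]
      obtain ⟨θ, hθ⟩ := cover M (x ∘ Sum.inl) (x ∘ Sum.inr)
        ((realizesD_iff _).2 fun k => Formula.realize_relabel.1 (hx _ (Or.inl ⟨k, rfl⟩)))
        ((realizesD_iff _).2 fun k => Formula.realize_relabel.1 (hx _ (Or.inr ⟨k, rfl⟩)))
      refine ⟨θ, ?_⟩
      rw [e, realizePair_iff]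
      exact hθ)
  let E : L.Formula (Fin n ⊕ Fin n) :=
    Formula.iSup (fun θ : {θ : s // P θ.1.1} => θ.1.1.1)
  have hE : ∀ (M : Type) [L.Structure M] [T.Model M] [Countable M] (a b : ℕ → M),
      Function.Surjective a → Function.Surjective b → RealizesD Φ a → RealizesD Φ b →
      (RealizePair E a b ↔ tpFun (Sum.elim a b) ∈ H) := by
    intro M _ _ _ a b g1 g2 k1 k2
    rw [RealizePair, Formula.realize_iSup]
    constructor
    · rintro ⟨θ, hθ⟩
      exact θ.2 M a b g1 g2 k1 k2 hθ
    · intro h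
      obtain ⟨θ, hθs, hθ⟩ := hs M (Sum.elim a b) (by
        rintro _ (⟨k, rfl⟩ | ⟨k, rfl⟩)
        · exact Formula.realize_relabel.2 ((realizesD_iff a).1 k1 k)
        · exact Formula.realize_relabel.2 ((realizesD_iff b).1 k2 k))
      rw [realizePair_iff] at hθ
      have hP : P θ.1 := by
        rcases θ.2 with hP | hQ
        · exact hP
        · exact absurd h (hQ M a b g1 g2 k1 k2 hθ)
      exact ⟨⟨⟨θ, hθs⟩, hP⟩, hθ⟩
  refine ⟨n, E, ?_, ?_⟩
  · intro M _ _ _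
    have ext : ∀ a : ℕ → M, RealizesD Φ a →
        ∃ a' : ℕ → M, Function.Surjective a' ∧ RealizesD Φ a' ∧ ∀ i < n, a' i = a i :=
      fun a ha => exists_enumeration hΦ n a (ha.dBelow n)
    refine ⟨?_, ?_, ?_⟩
    · intro a ha
      obtain ⟨a', ha1, ha2, ha3⟩ := ext a ha
      rw [← realizePair_congr E ha3 ha3, hE M a' a' ha1 ha1 ha2 ha2]
      exact hrefl M a' ha1 ha2
    · intro a b ha hb
      obtain ⟨a', ha1, ha2, ha3⟩ := ext a ha
      obtain ⟨b', hb1, hb2, hb3⟩ := ext b hb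
      rw [← realizePair_congr E ha3 hb3, hE M a' b' ha1 hb1 ha2 hb2,
        ← realizePair_congr E hb3 ha3, hE M b' a' hb1 ha1 hb2 ha2]
      exact hsymm M a' b' ha1 hb1 ha2 hb2
    · intro a b c ha hb hc
      obtain ⟨a', ha1, ha2, ha3⟩ := ext a ha
      obtain ⟨b', hb1, hb2, hb3⟩ := ext b hb
      obtain ⟨c', hc1, hc2, hc3⟩ := ext c hc
      rw [← realizePair_congr E ha3 hb3, hE M a' b' ha1 hb1 ha2 hb2,
        ← realizePair_congr E hb3 hc3, hE M b' c' hb1 hc1 hb2 hc2,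
        ← realizePair_congr E ha3 hc3, hE M a' c' ha1 hc1 ha2 hc2]
      exact htrans M a' b' c' ha1 hb1 hc1 ha2 hb2 hc2
  · ext p
    constructor
    · intro hp
      obtain ⟨M, i1, i2, i3, a, b, h1, h2, h3, h4, rfl⟩ := hHG hp
      exact (mem_fmlPairSet_tpFun E a b).2 ⟨hHG hp, (hE M a b h1 h2 h3 h4).2 hp⟩
    · intro hp
      obtain ⟨M, i1, i2, i3, a, b, h1, h2, h3, h4, rfl⟩ := hp.1
      exact (hE M a b h1 h2 h3 h4).1 ((mem_fmlPairSet_tpFun E a b).1 hp).2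

end Helpers

/-- STATEMENT 19: the map `E ↦ [E]_G` defines a bijection between the definable
equivalence relations on `D_Φ` (up to `T`-equivalence on `D_Φ`) and the clopen subsets
`H ⊆ G_Φ(T)` with `H = H · H⁻¹` and `B_Φ(T) ⊆ H`.  Moreover, if `H = [E]_G` and
`a ∈ M^ℕ` realizes `D_Φ` and enumerates a countable model `M`, with `e = tp(a)`, then
`tp(a,b) ↦ [b]_E` is a bijection between the coset space `{gH : t_g = e}` and the set
of `E`-classes of realizations of `D_Φ` in `M`. -/
theorem defEquivRel_clopen_subgroupoid_bijection {L : FirstOrder.Language}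
    [Countable L.Symbols] (T : L.Theory) (hT : T.IsComplete)
    (Φ : ∀ n : ℕ, L.Formula (Fin n ⊕ Unit)) (hΦ : IsRich Φ) :
    -- `[E]_G` is a clopen subset of `G_Φ(T)` with `[E]_G = [E]_G · [E]_G⁻¹`
    -- containing `B_Φ(T)`
    (∀ (n : ℕ) (E : L.Formula (Fin n ⊕ Fin n)), IsDefEquivRel T Φ n E →
      (∃ U, IsOpen U ∧ FmlPairSet T Φ n E = U ∩ GPhi T Φ) ∧
      (∃ C, IsClosed C ∧ FmlPairSet T Φ n E = C ∩ GPhi T Φ) ∧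
      prodSet T Φ (FmlPairSet T Φ n E) (invSet T Φ (FmlPairSet T Φ n E)) =
        FmlPairSet T Φ n E ∧
      basePairs T Φ ⊆ FmlPairSet T Φ n E) ∧
    -- the map `E ↦ [E]_G` is onto such subsets
    (∀ H : Set (L.Formula (ℕ ⊕ ℕ) → Bool), H ⊆ GPhi T Φ →
      (∃ U, IsOpen U ∧ H = U ∩ GPhi T Φ) →
      (∃ C, IsClosed C ∧ H = C ∩ GPhi T Φ) →
      prodSet T Φ H (invSet T Φ H) = H →
      basePairs T Φ ⊆ H →
      ∃ (n : ℕ) (E : L.Formula (Fin n ⊕ Fin n)),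
        IsDefEquivRel T Φ n E ∧ H = FmlPairSet T Φ n E) ∧
    -- and it is injective up to `T`-equivalence on `D_Φ`
    (∀ (n : ℕ) (E : L.Formula (Fin n ⊕ Fin n)) (n' : ℕ) (E' : L.Formula (Fin n' ⊕ Fin n')),
      IsDefEquivRel T Φ n E → IsDefEquivRel T Φ n' E' →
      (FmlPairSet T Φ n E = FmlPairSet T Φ n' E' ↔
        ∀ (M : Type) (_ : L.Structure M) (_ : T.Model M) (_ : Countable M) (a b : ℕ → M),
          RealizesD Φ a → RealizesD Φ b → (RealizePair E a b ↔ RealizePair E' a b))) ∧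
    -- the coset space `{gH : t_g = tp(a)}` is in bijection with `D_Φ/E` in `M`,
    -- via `tp(a,b) ↦ [b]_E`
    (∀ (n : ℕ) (E : L.Formula (Fin n ⊕ Fin n)), IsDefEquivRel T Φ n E →
      ∀ (M : Type) (_ : L.Structure M) (_ : T.Model M) (_ : Countable M) (a : ℕ → M),
        Function.Surjective a → RealizesD Φ a →
        -- every `g ∈ G_Φ(T)` with `t_g = tp(a)` is of the form `tp(a,b)`,
        -- `b` an enumeration of `M` realizing `D_Φ`
        (∀ g ∈ GPhi T Φ, tgtMap g = tpFun a →
          ∃ b : ℕ → M, Function.Surjective b ∧ RealizesD Φ b ∧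
            g = tpFun (Sum.elim a b)) ∧
        -- cosets `tp(a,b)·[E]_G` and `tp(a,c)·[E]_G` coincide exactly when `E(b,c)`
        (∀ b c : ℕ → M, Function.Surjective b → RealizesD Φ b →
          Function.Surjective c → RealizesD Φ c →
          (coset T Φ (tpFun (Sum.elim a b)) (FmlPairSet T Φ n E) =
              coset T Φ (tpFun (Sum.elim a c)) (FmlPairSet T Φ n E) ↔
            RealizePair E b c)) ∧
        -- every `E`-class of a realization of `D_Φ` in `M` is the class of an
        -- enumeration of `M` realizing `D_Φ`
        (∀ b' : ℕ → M, RealizesD Φ b' →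
          ∃ b : ℕ → M, Function.Surjective b ∧ RealizesD Φ b ∧ RealizePair E b b')) := by
  have memG : ∀ (M : Type) [L.Structure M] [T.Model M] [Countable M] (a b : ℕ → M),
      Function.Surjective a → Function.Surjective b → RealizesD Φ a → RealizesD Φ b →
      tpFun (Sum.elim a b) ∈ GPhi T Φ := fun M i1 i2 i3 a b h1 h2 h3 h4 =>
    ⟨M, i1, i2, i3, a, b, h1, h2, h3, h4, rfl⟩
  have tpPair : ∀ {n : ℕ} (E : L.Formula (Fin n ⊕ Fin n)) {M N : Type} [L.Structure M]
      [L.Structure N] (a b : ℕ → M) (c d : ℕ → N),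
      tpFun (L := L) (Sum.elim a b) = tpFun (Sum.elim c d) →
      (RealizePair E a b ↔ RealizePair E c d) := by
    intro n E M N _ _ a b c d h
    rw [← realizePair_iff, ← realizePair_iff]
    exact (tpFun_eq_iff _ _).1 h _
  refine ⟨?_, ?_, ?_, ?_⟩
  · intro n E hE
    refine ⟨⟨{p | p (E.relabel (Sum.map (Fin.val) (Fin.val))) = true}, ?_, ?_⟩,
      ⟨{p | p (E.relabel (Sum.map (Fin.val) (Fin.val))) = true}, ?_, ?_⟩, ?_, ?_⟩
    · have hc : Continuous (fun p : L.Formula (ℕ ⊕ ℕ) → Bool =>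
          p (E.relabel (Sum.map (Fin.val) (Fin.val)))) := continuous_apply _
      exact (isOpen_discrete ({true} : Set Bool)).preimage hc
    · ext p
      exact and_comm
    · have hc : Continuous (fun p : L.Formula (ℕ ⊕ ℕ) → Bool =>
          p (E.relabel (Sum.map (Fin.val) (Fin.val)))) := continuous_apply _
      exact (isClosed_discrete ({true} : Set Bool)).preimage hc
    · ext p
      exact and_comm
    · ext p
      constructor
      · rintro ⟨M, i1, i2, i3, a, b, c, ha, hb, hc, ha', hb', hc', hab, hbc, rfl⟩
        obtain ⟨N, j1, j2, j3, d, e, hd, he, hd', he', hde, htp⟩ := hbc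
        rw [mem_fmlPairSet_tpFun] at hab hde ⊢
        obtain ⟨-, hs, ht⟩ := hE M i1 i2 i3
        obtain ⟨-, hsN, -⟩ := hE N j1 j2 j3
        refine ⟨memG M a c ha hc ha' hc', ht a b c ha' hb' hc' hab.2 ?_⟩
        exact (tpPair E _ _ _ _ htp).2 (hsN d e hd' he' hde.2)
      · intro hp
        obtain ⟨M, i1, i2, i3, a, b, h1, h2, h3, h4, rfl⟩ := hp.1
        refine ⟨M, i1, i2, i3, a, b, b, h1, h2, h2, h3, h4, h4, hp,
          ⟨M, i1, i2, i3, b, b, h2, h2, h4, h4, ?_, rfl⟩, rfl⟩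
        exact (mem_fmlPairSet_tpFun E b b).2 ⟨memG M b b h2 h2 h4 h4, (hE M i1 i2 i3).1 b h4⟩
    · rintro _ ⟨M, i1, i2, i3, a, h1, h2, rfl⟩
      exact (mem_fmlPairSet_tpFun E a a).2 ⟨memG M a a h1 h1 h2 h2, (hE M i1 i2 i3).1 a h2⟩
  · exact fun H h1 h2 h3 h4 h5 => surj_part T Φ hΦ H h1 h2 h3 h4 h5
  · intro n E n' E' _ _
    constructor
    · intro h M i1 i2 i3 a b ha hb
      obtain ⟨a', ha1, ha2, ha3⟩ := exists_enumeration hΦ (max n n') a (ha.dBelow _)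
      obtain ⟨b', hb1, hb2, hb3⟩ := exists_enumeration hΦ (max n n') b (hb.dBelow _)
      have hG := memG M a' b' ha1 hb1 ha2 hb2
      have key : tpFun (Sum.elim a' b') ∈ FmlPairSet T Φ n E ↔
          tpFun (Sum.elim a' b') ∈ FmlPairSet T Φ n' E' := by rw [h]
      rw [mem_fmlPairSet_tpFun, mem_fmlPairSet_tpFun, and_iff_right hG, and_iff_right hG,
        realizePair_congr E (fun i hi => ha3 i (by omega)) (fun i hi => hb3 i (by omega)),
        realizePair_congr E' (fun i hi => ha3 i (by omega)) (fun i hi => hb3 i (by omega))] at key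
      exact key
    · intro h
      ext p
      constructor
      · intro hp
        obtain ⟨M, i1, i2, i3, a, b, h1, h2, h3, h4, rfl⟩ := hp.1
        rw [mem_fmlPairSet_tpFun] at hp ⊢
        exact ⟨hp.1, (h M i1 i2 i3 a b h3 h4).1 hp.2⟩
      · intro hp
        obtain ⟨M, i1, i2, i3, a, b, h1, h2, h3, h4, rfl⟩ := hp.1
        rw [mem_fmlPairSet_tpFun] at hp ⊢
        exact ⟨hp.1, (h M i1 i2 i3 a b h3 h4).2 hp.2⟩
  · intro n E hE M i1 i2 i3 a ha haD
    obtain ⟨hr, hs, ht⟩ := hE M i1 i2 i3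
    refine ⟨?_, ?_, ?_⟩
    · rintro _ ⟨N, j1, j2, j3, c, d, hc, hd, hcD, hdD, rfl⟩ htgt
      have htp : tpFun (L := L) c = tpFun a := by
        rw [← htgt]
        funext φ
        rw [tgtMap, Bool.eq_iff_iff, tpFun_eq_true_iff, tpFun_eq_true_iff,
          Formula.realize_relabel, Sum.elim_comp_inl]
      obtain ⟨f, hf⟩ := exists_iso hc ha htp
      refine ⟨f ∘ d, f.surjective.comp hd, iso_realizesD f hdD, ?_⟩
      have e : Sum.elim a (f ∘ d) = f ∘ Sum.elim c d := by
        rw [Sum.comp_elim]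
        congr 1
        funext i
        exact (hf i).symm
      rw [tpFun_eq_iff, e]
      exact fun φ => (iso_realize f φ _).symm
    · have main : ∀ b d : ℕ → M, Function.Surjective b → RealizesD Φ b →
          Function.Surjective d → RealizesD Φ d →
          (tpFun (Sum.elim a d) ∈ coset T Φ (tpFun (Sum.elim a b)) (FmlPairSet T Φ n E) ↔
            RealizePair E b d) := by
        intro b d hb hbD hd hdD
        constructor
        · rintro ⟨N, j1, j2, j3, a', b', d', ha', hb', hd', haD', hbD', hdD', h1, h2, h3⟩
          have h1 : tpFun (L := L) (Sum.elim a' b') = tpFun (Sum.elim a b) := h1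
          obtain ⟨f, hf⟩ := exists_iso (L := L) (x := Sum.elim a' b') (y := Sum.elim a b)
            (fun m => (ha' m).imp' Sum.inl fun _ h => h)
            (fun m => (ha m).imp' Sum.inl fun _ h => h) h1
          obtain ⟨g, hg⟩ := exists_iso (L := L) (x := Sum.elim a' d') (y := Sum.elim a d)
            (fun m => (ha' m).imp' Sum.inl fun _ h => h)
            (fun m => (ha m).imp' Sum.inl fun _ h => h) h3.symm
          have hfg : ∀ m, f m = g m := by
            intro m
            obtain ⟨i, rfl⟩ := ha' m
            exact (hf (Sum.inl i)).trans (hg (Sum.inl i)).symm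
          have hE' := ((mem_fmlPairSet_tpFun E b' d').1 h2).2
          rw [RealizePair, ← iso_realize f, Sum.comp_elim] at hE'
          have e1 : (f ∘ fun i : Fin n => b' i) = fun i : Fin n => b i :=
            funext fun i => hf (Sum.inr i.1)
          have e2 : (f ∘ fun i : Fin n => d' i) = fun i : Fin n => d i :=
            funext fun i => (hfg _).trans (hg (Sum.inr i.1))
          rw [e1, e2] at hE'
          exact hE'
        · intro h
          exact ⟨M, i1, i2, i3, a, b, d, ha, hb, hd, haD, hbD, hdD, rfl,
            (mem_fmlPairSet_tpFun E b d).2 ⟨memG M b d hb hd hbD hdD, h⟩, rfl⟩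
      have sub : ∀ b c : ℕ → M, Function.Surjective b → RealizesD Φ b →
          Function.Surjective c → RealizesD Φ c → RealizePair E c b →
          coset T Φ (tpFun (Sum.elim a b)) (FmlPairSet T Φ n E) ⊆
            coset T Φ (tpFun (Sum.elim a c)) (FmlPairSet T Φ n E) := by
        intro b c hb hbD hc hcD hcb p hp
        have hp' := hp
        obtain ⟨N, j1, j2, j3, a', b', d', ha', hb', hd', haD', hbD', hdD', h1, h2, rfl⟩ := hp'
        have h1 : tpFun (L := L) (Sum.elim a' b') = tpFun (Sum.elim a b) := h1
        obtain ⟨f, hf⟩ := exists_iso (L := L) (x := Sum.elim a' b') (y := Sum.elim a b)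
          (fun m => (ha' m).imp' Sum.inl fun _ h => h)
          (fun m => (ha m).imp' Sum.inl fun _ h => h) h1
        have e : Sum.elim a (f ∘ d') = f ∘ Sum.elim a' d' := by
          rw [Sum.comp_elim]
          congr 1
          funext i
          exact (hf (Sum.inl i)).symm
        have htp : tpFun (L := L) (Sum.elim a' d') = tpFun (Sum.elim a (f ∘ d')) := by
          rw [tpFun_eq_iff, e]
          exact fun φ => (iso_realize f φ _).symm
        have hd1 : Function.Surjective (f ∘ d') := f.surjective.comp hd'
        have hd2 := iso_realizesD f hdD'
        rw [htp] at hp ⊢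
        rw [main b _ hb hbD hd1 hd2] at hp
        rw [main c _ hc hcD hd1 hd2]
        exact ht _ _ _ hcD hbD hd2 hcb hp
      intro b c hb hbD hc hcD
      constructor
      · intro h
        rw [← main b c hb hbD hc hcD, h, main c c hc hcD hc hcD]
        exact hr c hcD
      · intro h
        exact Set.Subset.antisymm (sub b c hb hbD hc hcD (hs b c hbD hcD h))
          (sub c b hc hcD hb hbD h)
    · intro b' hb'
      obtain ⟨b, hb1, hb2, hb3⟩ := exists_enumeration hΦ n b' (hb'.dBelow n)
      exact ⟨b, hb1, hb2, (realizePair_congr E hb3 (fun _ _ => rfl)).2 (hr b' hb')⟩
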